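/- ε-Direct theorem (Theorem 5.1). Let V = {Vⁿ} be a general source, W = {Wⁿ} a general channel, and 0 ≤ ε < 1. Suppose there exist a channel input X = {Xⁿ} (possibly correlated with the source) and a sequence {γₙ} with γₙ > 0, γₙ → 0, nγₙ → ∞, such that limsupₙ Pr{ (1/n) log( Wⁿ(Yⁿ|Xⁿ)/P_{Yⁿ}(Yⁿ) ) ≤ (1/n) log( 1/P_{Vⁿ}(Vⁿ) ) + γₙ } ≤ ε, where Yⁿ is the channel output due to input Xⁿ. Then V is ε-transmissible over W. -/

import Mathlib

open Filter Real Topology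

namespace ISC

/-- Words of length `n` over alphabet `A`. -/
abbrev Word (A : Type*) (n : ℕ) : Type _ := Fin n → A

/-- `p` is a probability mass function. -/
def IsPMF {α : Type*} (p : α → ℝ) : Prop :=
  (∀ a, 0 ≤ p a) ∧ HasSum p 1

/-- Probability of the event `S` under the pmf `p`. -/
noncomputable def prob {α : Type*} (p : α → ℝ) (S : Set α) : ℝ :=
  ∑' a, S.indicator p a

/-- Output marginal `P_{Yⁿ}` of the channel `W` fed with the joint input law `P_{VⁿXⁿ}`. -/
noncomputable def outDist {𝒱 𝒳 𝒴 : Type*} {n : ℕ}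
    (PVX : Word 𝒱 n × Word 𝒳 n → ℝ) (W : Word 𝒳 n → Word 𝒴 n → ℝ)
    (y : Word 𝒴 n) : ℝ :=
  ∑' vx : Word 𝒱 n × Word 𝒳 n, PVX vx * W vx.2 y

/-- Joint law of `(Vⁿ, Xⁿ, Yⁿ)`: `P_{VⁿXⁿ}(v,x) · Wⁿ(y|x)`. -/
noncomputable def jointLaw {𝒱 𝒳 𝒴 : Type*} {n : ℕ}
    (PVX : Word 𝒱 n × Word 𝒳 n → ℝ) (W : Word 𝒳 n → Word 𝒴 n → ℝ) :
    Word 𝒱 n × Word 𝒳 n × Word 𝒴 n → ℝ :=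
  fun z => PVX (z.1, z.2.1) * W z.2.1 z.2.2

/-- The joint input law `P_{VⁿXⁿ}` induced by the deterministic encoder `φ`:
`P_{Vⁿ}(v) 1{x = φ(v)}`. -/
noncomputable def codeInput {𝒱 𝒳 : Type*} [DecidableEq 𝒳] {n : ℕ} (PV : Word 𝒱 n → ℝ)
    (φ : Word 𝒱 n → Word 𝒳 n) : Word 𝒱 n × Word 𝒳 n → ℝ :=
  fun vx => if vx.2 = φ vx.1 then PV vx.1 else 0

/-- Error probability `εₙ` of the joint source-channel code `(φ, ψ)`. -/
noncomputable def errProb {𝒱 𝒳 𝒴 : Type*} {n : ℕ}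
    (PV : Word 𝒱 n → ℝ) (W : Word 𝒳 n → Word 𝒴 n → ℝ)
    (φ : Word 𝒱 n → Word 𝒳 n) (ψ : Word 𝒴 n → Word 𝒱 n) : ℝ :=
  ∑' v, PV v * prob (W (φ v)) {y | ψ y ≠ v}

/-- `V` is transmissible over `W`. -/
def Transmissible {𝒱 𝒳 𝒴 : Type*} (PV : (n : ℕ) → Word 𝒱 n → ℝ)
    (W : (n : ℕ) → Word 𝒳 n → Word 𝒴 n → ℝ) : Prop :=
  ∃ (φ : (n : ℕ) → Word 𝒱 n → Word 𝒳 n) (ψ : (n : ℕ) → Word 𝒴 n → Word 𝒱 n),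
    Tendsto (fun n => errProb (PV n) (W n) (φ n) (ψ n)) atTop (nhds 0)

/-- Output marginal of the channel `W` for an input distribution `P_{Xⁿ}`. -/
noncomputable def outDistX {𝒳 𝒴 : Type*} {n : ℕ}
    (PX : Word 𝒳 n → ℝ) (W : Word 𝒳 n → Word 𝒴 n → ℝ) (y : Word 𝒴 n) : ℝ :=
  ∑' x : Word 𝒳 n, PX x * W x y

/-- Joint law of `(Xⁿ, Yⁿ)`: `P_{Xⁿ}(x) · Wⁿ(y|x)`. -/
noncomputable def jointXY {𝒳 𝒴 : Type*} {n : ℕ}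
    (PX : Word 𝒳 n → ℝ) (W : Word 𝒳 n → Word 𝒴 n → ℝ) :
    Word 𝒳 n × Word 𝒴 n → ℝ :=
  fun z => PX z.1 * W z.1 z.2

/-- Limit superior in probability of a sequence of random variables `Z i`
distributed according to the pmfs `p i`. -/
noncomputable def plimsup {α : ℕ → Type*} (p : (i : ℕ) → α i → ℝ)
    (Z : (i : ℕ) → α i → ℝ) : EReal :=
  sInf {β : EReal |
    Tendsto (fun i => prob (p i) {a | β < (Z i a : EReal)}) atTop (nhds 0)}

/-- Limit inferior in probability of a sequence of random variables `Z i`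
distributed according to the pmfs `p i`. -/
noncomputable def pliminf {α : ℕ → Type*} (p : (i : ℕ) → α i → ℝ)
    (Z : (i : ℕ) → α i → ℝ) : EReal :=
  sSup {β : EReal |
    Tendsto (fun i => prob (p i) {a | (Z i a : EReal) < β}) atTop (nhds 0)}

/-- Spectral sup-entropy rate `H̄(V)`. -/
noncomputable def Hbar {𝒱 : Type*} (PV : (n : ℕ) → Word 𝒱 n → ℝ) : EReal :=
  plimsup (fun n => PV n) (fun n v => (1 / (n : ℝ)) * Real.log (1 / PV n v))

/-- Spectral inf-entropy rate `H_(V)`. -/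
noncomputable def Hlow {𝒱 : Type*} (PV : (n : ℕ) → Word 𝒱 n → ℝ) : EReal :=
  pliminf (fun n => PV n) (fun n v => (1 / (n : ℝ)) * Real.log (1 / PV n v))

/-- Spectral inf-information rate `I_(X;Y)` of the channel `W` with input `X`. -/
noncomputable def Ilow {𝒳 𝒴 : Type*} (PX : (n : ℕ) → Word 𝒳 n → ℝ)
    (W : (n : ℕ) → Word 𝒳 n → Word 𝒴 n → ℝ) : EReal :=
  pliminf (fun n => jointXY (PX n) (W n))
    (fun n z => (1 / (n : ℝ)) * Real.log (W n z.1 z.2 / outDistX (PX n) (W n) z.2))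

/-- Spectral sup-information rate `Ī(X;Y)` of the channel `W` with input `X`. -/
noncomputable def Ihigh {𝒳 𝒴 : Type*} (PX : (n : ℕ) → Word 𝒳 n → ℝ)
    (W : (n : ℕ) → Word 𝒳 n → Word 𝒴 n → ℝ) : EReal :=
  plimsup (fun n => jointXY (PX n) (W n))
    (fun n z => (1 / (n : ℝ)) * Real.log (W n z.1 z.2 / outDistX (PX n) (W n) z.2))

/-- `sup_X I_(X;Y)`: the supremum over all channel inputs. -/
noncomputable def supIlow {𝒳 𝒴 : Type*}
    (W : (n : ℕ) → Word 𝒳 n → Word 𝒴 n → ℝ) : EReal :=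
  ⨆ PX : {PX : (n : ℕ) → Word 𝒳 n → ℝ // ∀ n, IsPMF (PX n)}, Ilow PX.1 W



open MeasureTheory ProbabilityTheory in
open scoped ENNReal in
open scoped Classical in
theorem oneShot {V X Y : Type} [Countable V] [Countable X] [Countable Y] [Nonempty V]
    (PVX : V → X → ℝ≥0∞) (PV : V → ℝ≥0∞) (W : X → Y → ℝ≥0∞) (PY : Y → ℝ≥0∞)
    (hPVX : ∀ v, ∑' x, PVX v x = PV v) (hPV : ∑' v, PV v = 1)
    (hW : ∀ x, ∑' y, W x y = 1)
    (hPY : ∀ y, ∑' v, ∑' x, PVX v x * W x y = PY y)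
    (c : ℝ≥0∞) (hc0 : c ≠ 0) (hct : c ≠ ⊤) (T : V → X → Y → Prop)
    (hT : ∀ v x y, T v x y → c * PY y ≤ PV v * W x y) :
    ∃ (φ : V → X) (ψ : Y → V),
      ∑' v, PV v * ∑' y, (if ψ y ≠ v then W (φ v) y else 0) ≤
        (∑' v, ∑' x, ∑' y, (if T v x y then 0 else PVX v x * W x y)) + c⁻¹ := by
  have hPVle : ∀ v, PV v ≤ 1 := fun v => hPV ▸ ENNReal.le_tsum v
  have hX : Nonempty X := by
    by_contra h
    rw [not_nonempty_iff] at h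
    have : ∀ v, PV v = 0 := fun v => by rw [← hPVX v]; simp
    simp [this] at hPV
  have hq : ∀ v, ∃ q : PMF X, ∀ x, PV v * q x = PVX v x := by
    intro v
    by_cases h0 : PV v = 0
    · refine ⟨PMF.pure hX.some, fun x => ?_⟩
      have h1 := hPVX v
      rw [h0, ENNReal.tsum_eq_zero] at h1
      rw [h0, h1 x, zero_mul]
    · have ht : PV v ≠ ⊤ := ne_top_of_le_ne_top ENNReal.one_ne_top (hPVle v)
      refine ⟨PMF.normalize (PVX v) (by rwa [hPVX v]) (by rwa [hPVX v]), fun x => ?_⟩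
      rw [PMF.normalize_apply, hPVX v, mul_comm, mul_assoc, ENNReal.inv_mul_cancel h0 ht, mul_one]
  choose q hq using hq
  let _ : MeasurableSpace X := ⊤
  have : DiscreteMeasurableSpace X := ⟨fun _ => trivial⟩
  let μ : Measure (V → X) := Measure.infinitePi (fun v => (q v).toMeasure)
  have : IsProbabilityMeasure μ := by dsimp [μ]; infer_instance
  have hm : ∀ (g : X → ℝ≥0∞), Measurable g := fun g => measurable_from_top
  have hint : ∀ (v : V) (g : X → ℝ≥0∞), ∫⁻ ω, g (ω v) ∂μ = ∑' x, q v x * g x := by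
    intro v g
    have := (measurePreserving_eval_infinitePi (fun v => (q v).toMeasure) v).lintegral_comp (hm g)
    simp only [Function.eval] at this
    rw [show (∫⁻ ω, g (ω v) ∂μ) = _ from this, lintegral_countable']
    refine tsum_congr fun x => ?_
    rw [PMF.toMeasure_apply_singleton _ _ (measurableSet_singleton x), mul_comm]
  have hind : ∀ (v v' : V) (_ : v' ≠ v) (g g' : X → ℝ≥0∞),
      ∫⁻ ω, g (ω v) * g' (ω v') ∂μ = (∑' x, q v x * g x) * ∑' x, q v' x * g' x := by
    intro v v' hne g g'
    have hI : iIndepFun (fun (v : V) (ω : V → X) => ω v) μ :=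
      iIndepFun_infinitePi (P := fun v => (q v).toMeasure) (X := fun _ x => x)
        (fun _ => measurable_id)
    have h2 := (hI.indepFun hne.symm).comp (hm g) (hm g')
    rw [← hint, ← hint]
    exact lintegral_mul_eq_lintegral_mul_lintegral_of_indepFun
      ((hm g).comp (measurable_pi_apply v)) ((hm g').comp (measurable_pi_apply v')) h2
  let F : (V → X) → ℝ≥0∞ := fun ω => ∑' v, PV v *
    ((∑' y, (if T v (ω v) y then 0 else W (ω v) y)) +
      ∑' y, ∑' v', if v' = v then 0 else W (ω v) y * (if T v' (ω v') y then 1 else 0))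
  have hm1 : ∀ v y, Measurable fun ω : V → X => (if T v (ω v) y then 0 else W (ω v) y) :=
    fun v y => (hm (fun x => if T v x y then 0 else W x y)).comp (measurable_pi_apply v)
  have hm2 : ∀ v y v', Measurable fun ω : V → X =>
      (if v' = v then 0 else W (ω v) y * (if T v' (ω v') y then 1 else 0)) := by
    intro v y v'
    by_cases h : v' = v
    · simp only [h, if_true]; exact measurable_const
    · simp only [h, if_false]
      exact ((hm (fun x => W x y)).comp (measurable_pi_apply v)).mul
        ((hm (fun x => if T v' x y then 1 else 0)).comp (measurable_pi_apply v'))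
  have hm1' : ∀ v, Measurable fun ω : V → X => ∑' y, (if T v (ω v) y then 0 else W (ω v) y) :=
    fun v => Measurable.tsum fun y => hm1 v y
  have hm2'' : ∀ v y, Measurable fun ω : V → X =>
      ∑' v', (if v' = v then 0 else W (ω v) y * (if T v' (ω v') y then 1 else 0)) :=
    fun v y => Measurable.tsum fun v' => hm2 v y v'
  have hm2' : ∀ v, Measurable fun ω : V → X => ∑' y,
      ∑' v', (if v' = v then 0 else W (ω v) y * (if T v' (ω v') y then 1 else 0)) :=
    fun v => Measurable.tsum fun y => hm2'' v y
  have hG : ∀ v, Measurable fun ω : V → X =>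
    ((∑' y, (if T v (ω v) y then 0 else W (ω v) y)) +
      ∑' y, ∑' v', if v' = v then 0 else W (ω v) y * (if T v' (ω v') y then 1 else 0)) :=
    fun v => (hm1' v).add (hm2' v)
  have hG' : ∀ v, Measurable fun ω : V → X => PV v *
    ((∑' y, (if T v (ω v) y then 0 else W (ω v) y)) +
      ∑' y, ∑' v', if v' = v then 0 else W (ω v) y * (if T v' (ω v') y then 1 else 0)) :=
    fun v => measurable_const.mul (hG v)
  have hFm : Measurable F := Measurable.tsum fun v => hG' v
  have hA : ∀ v, ∫⁻ ω, ∑' y, (if T v (ω v) y then 0 else W (ω v) y) ∂μ =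
      ∑' x, q v x * ∑' y, (if T v x y then 0 else W x y) := fun v =>
    hint v (fun x => ∑' y, (if T v x y then 0 else W x y))
  let A : V → Y → ℝ≥0∞ := fun v y => ∑' x, q v x * W x y
  let B : V → Y → ℝ≥0∞ := fun v y => ∑' x, q v x * (if T v x y then 1 else 0)
  have hB : ∀ v, ∫⁻ ω, ∑' y, ∑' v',
      (if v' = v then 0 else W (ω v) y * (if T v' (ω v') y then 1 else 0)) ∂μ ≤
      ∑' y, ∑' v', A v y * B v' y := by
    intro v
    rw [lintegral_tsum fun y => (hm2'' v y).aemeasurable]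
    refine ENNReal.tsum_le_tsum fun y => ?_
    rw [lintegral_tsum fun v' => (hm2 v y v').aemeasurable]
    refine ENNReal.tsum_le_tsum fun v' => ?_
    by_cases h : v' = v
    · simp [h]
    · simp only [h, if_false]
      exact (hind v v' h (fun x => W x y) (fun x => if T v' x y then 1 else 0)).le
  have hAsum : ∀ y, ∑' v, PV v * A v y = PY y := by
    intro y
    rw [← hPY y]
    refine tsum_congr fun v => ?_
    rw [← ENNReal.tsum_mul_left]
    refine tsum_congr fun x => ?_
    rw [← mul_assoc, hq]
  have hBle : ∀ v y, PY y * B v y ≤ ∑' x, c⁻¹ * (PVX v x * W x y) := by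
    intro v y
    rw [← ENNReal.tsum_mul_left]
    refine ENNReal.tsum_le_tsum fun x => ?_
    by_cases h : T v x y
    · have h1 : PY y ≤ c⁻¹ * (PV v * W x y) := by
        rw [← ENNReal.inv_mul_cancel_left hc0 hct (b := PY y)]
        exact mul_le_mul_right (hT v x y h) _
      simp only [h, if_true, mul_one]
      rw [← hq v x]
      calc PY y * q v x ≤ c⁻¹ * (PV v * W x y) * q v x := mul_le_mul_left h1 _
        _ = _ := by ring
    · simp [h]
  have hF : ∫⁻ ω, F ω ∂μ ≤
      (∑' v, ∑' x, ∑' y, (if T v x y then 0 else PVX v x * W x y)) + c⁻¹ := by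
    have e1 : ∫⁻ ω, F ω ∂μ ≤ ∑' v, (PV v * (∑' x, q v x * ∑' y, (if T v x y then 0 else W x y))
        + PV v * ∑' y, ∑' v', A v y * B v' y) := by
      simp only [F]
      rw [lintegral_tsum fun v => (hG' v).aemeasurable]
      refine ENNReal.tsum_le_tsum fun v => ?_
      rw [lintegral_const_mul _ (hG v), lintegral_add_left (hm1' v), hA, mul_add]
      gcongr
      exact hB v
    refine e1.trans ?_
    rw [ENNReal.tsum_add]
    refine add_le_add (le_of_eq ?_) ?_
    · refine tsum_congr fun v => ?_
      rw [← ENNReal.tsum_mul_left]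
      refine tsum_congr fun x => ?_
      rw [← mul_assoc, hq, ← ENNReal.tsum_mul_left]
      refine tsum_congr fun y => ?_
      split_ifs <;> simp
    · calc ∑' v, PV v * ∑' y, ∑' v', A v y * B v' y
          = ∑' v, ∑' y, ∑' v', PV v * A v y * B v' y := by
            simp only [← ENNReal.tsum_mul_left, mul_assoc]
        _ = ∑' y, ∑' v', ∑' v, PV v * A v y * B v' y := by
            rw [ENNReal.tsum_comm]
            exact tsum_congr fun y => ENNReal.tsum_comm
        _ = ∑' y, ∑' v', PY y * B v' y := by
            simp only [ENNReal.tsum_mul_right, hAsum]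
        _ ≤ ∑' y, ∑' v', ∑' x, c⁻¹ * (PVX v' x * W x y) :=
            ENNReal.tsum_le_tsum fun y => ENNReal.tsum_le_tsum fun v => hBle v y
        _ = c⁻¹ := by
            rw [ENNReal.tsum_comm]
            have : ∀ v, ∑' y, ∑' x, c⁻¹ * (PVX v x * W x y) = c⁻¹ * PV v := by
              intro v
              rw [ENNReal.tsum_comm]
              simp only [ENNReal.tsum_mul_left, hW, mul_one, hPVX]
            rw [tsum_congr this, ENNReal.tsum_mul_left, hPV, mul_one]
  obtain ⟨φ, hφ⟩ := exists_le_lintegral (μ := μ) hFm.aemeasurable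
  let ψ : Y → V := fun y => if h : ∃ v, T v (φ v) y then h.choose else Classical.arbitrary V
  refine ⟨φ, ψ, le_trans ?_ (hφ.trans hF)⟩
  refine ENNReal.tsum_le_tsum fun v => ?_
  gcongr
  rw [← ENNReal.tsum_add]
  refine ENNReal.tsum_le_tsum fun y => ?_
  by_cases hψ : ψ y = v
  · simp [hψ]
  simp only [ne_eq, hψ, not_false_eq_true, if_true]
  by_cases hTv : T v (φ v) y
  · have hex : ∃ v, T v (φ v) y := ⟨v, hTv⟩
    have hs : T (ψ y) (φ (ψ y)) y := by
      have : ψ y = hex.choose := by simp only [ψ]; rw [dif_pos hex]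
      rw [this]; exact hex.choose_spec
    refine le_trans ?_ (le_add_left (ENNReal.le_tsum (ψ y)))
    simp [hψ, hs]
  · simp [hTv]

theorem ofReal_tsum_le {α : Type*} (f : α → ℝ) (hf : ∀ a, 0 ≤ f a) :
    ENNReal.ofReal (∑' a, f a) ≤ ∑' a, ENNReal.ofReal (f a) := by
  by_cases h : Summable f
  · exact (ENNReal.ofReal_tsum_of_nonneg hf h).le
  · rw [tsum_eq_zero_of_not_summable h]; simp

theorem IsPMF.tsum_ofReal {α : Type*} {p : α → ℝ} (hp : IsPMF p) :
    ∑' a, ENNReal.ofReal (p a) = 1 := by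
  rw [← ENNReal.ofReal_tsum_of_nonneg hp.1 hp.2.summable, hp.2.tsum_eq, ENNReal.ofReal_one]

theorem IsPMF.le_one {α : Type*} {p : α → ℝ} (hp : IsPMF p) (a : α) : p a ≤ 1 :=
  le_hasSum hp.2 a fun b _ => hp.1 b

theorem prob_nonneg {α : Type*} {p : α → ℝ} (hp : ∀ a, 0 ≤ p a) (S : Set α) : 0 ≤ prob p S :=
  tsum_nonneg fun a => Set.indicator_nonneg (fun a _ => hp a) a

theorem jointLaw_isPMF {𝒱 𝒳 𝒴 : Type} {n : ℕ}
    (W : Word 𝒳 n → Word 𝒴 n → ℝ) (hW : ∀ x, IsPMF (W x))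
    (PVX : Word 𝒱 n × Word 𝒳 n → ℝ) (hPVX : IsPMF PVX) : IsPMF (jointLaw PVX W) := by
  have hJ0 : ∀ z, 0 ≤ jointLaw PVX W z := fun z => mul_nonneg (hPVX.1 _) ((hW _).1 _)
  have h1 : ∑' z, ENNReal.ofReal (jointLaw PVX W z) = 1 := by
    have h0 := hPVX.tsum_ofReal
    rw [ENNReal.tsum_prod'] at h0
    rw [ENNReal.tsum_prod']
    simp only [ENNReal.tsum_prod', jointLaw, ENNReal.ofReal_mul (hPVX.1 _),
      ENNReal.tsum_mul_left, (hW _).tsum_ofReal, mul_one, h0]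
  have h2 := ENNReal.summable_toReal (f := fun z => ENNReal.ofReal (jointLaw PVX W z))
    (by rw [h1]; simp)
  have hs : Summable (jointLaw PVX W) := h2.congr fun z => ENNReal.toReal_ofReal (hJ0 z)
  refine ⟨hJ0, ?_⟩
  have h3 : ∑' z, jointLaw PVX W z = 1 := by
    rw [← ENNReal.ofReal_tsum_of_nonneg hJ0 hs] at h1
    simpa using h1
  exact h3 ▸ hs.hasSum

theorem prob_jointLaw_le_one {𝒱 𝒳 𝒴 : Type} {n : ℕ}
    (W : Word 𝒳 n → Word 𝒴 n → ℝ) (hW : ∀ x, IsPMF (W x))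
    (PVX : Word 𝒱 n × Word 𝒳 n → ℝ) (hPVX : IsPMF PVX)
    (S : Set (Word 𝒱 n × Word 𝒳 n × Word 𝒴 n)) : prob (jointLaw PVX W) S ≤ 1 := by
  have h := jointLaw_isPMF W hW PVX hPVX
  rw [← h.2.tsum_eq]
  exact (h.2.summable.indicator S).tsum_le_tsum
    (fun z => Set.indicator_le_self' (fun _ _ => h.1 _) z) h.2.summable

open scoped ENNReal in
open scoped Classical in
theorem oneShotReal {𝒱 𝒳 𝒴 : Type} [Countable 𝒱] [Countable 𝒳] [Countable 𝒴] (n : ℕ)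
    (hn : 1 ≤ n)
    (PV : Word 𝒱 n → ℝ) (hPV : IsPMF PV)
    (W : Word 𝒳 n → Word 𝒴 n → ℝ) (hW : ∀ x, IsPMF (W x))
    (PVX : Word 𝒱 n × Word 𝒳 n → ℝ) (hPVX : IsPMF PVX)
    (hmarg : ∀ v, (∑' x : Word 𝒳 n, PVX (v, x)) = PV v)
    (γ : ℝ) (hγ : 0 < γ) :
    ∃ (φ : Word 𝒱 n → Word 𝒳 n) (ψ : Word 𝒴 n → Word 𝒱 n),
      errProb PV W φ ψ ≤ prob (jointLaw PVX W)
          {z : Word 𝒱 n × Word 𝒳 n × Word 𝒴 n |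
            (1 / (n : ℝ)) * Real.log (W z.2.1 z.2.2 / outDist PVX W z.2.2) ≤
              (1 / (n : ℝ)) * Real.log (1 / PV z.1) + γ} + Real.exp (-(n * γ)) := by
  set bad := {z : Word 𝒱 n × Word 𝒳 n × Word 𝒴 n |
            (1 / (n : ℝ)) * Real.log (W z.2.1 z.2.2 / outDist PVX W z.2.2) ≤
              (1 / (n : ℝ)) * Real.log (1 / PV z.1) + γ} with hbad
  have hne : Nonempty (Word 𝒱 n) := by
    by_contra h
    rw [not_nonempty_iff] at h
    have := hPV.2.tsum_eq
    simp at this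
  have hn0 : (0 : ℝ) < n := by exact_mod_cast hn
  have hPVX' : ∀ v, ∑' x, ENNReal.ofReal (PVX (v, x)) = ENNReal.ofReal (PV v) := by
    intro v
    rw [← ENNReal.ofReal_tsum_of_nonneg (fun x => hPVX.1 _)
      (hPVX.2.summable.comp_injective (Prod.mk_right_injective v)), hmarg]
  have hsumY : ∀ y, Summable fun vx : Word 𝒱 n × Word 𝒳 n => PVX vx * W vx.2 y := fun y =>
    Summable.of_nonneg_of_le (fun vx => mul_nonneg (hPVX.1 _) ((hW _).1 _))
      (fun vx => mul_le_of_le_one_right (hPVX.1 _) ((hW _).le_one _)) hPVX.2.summable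
  have hPY0 : ∀ y, 0 ≤ outDist PVX W y := fun y =>
    tsum_nonneg fun vx => mul_nonneg (hPVX.1 _) ((hW _).1 _)
  have hPY : ∀ y, ∑' v, ∑' x, ENNReal.ofReal (PVX (v, x)) * ENNReal.ofReal (W x y) =
      ENNReal.ofReal (outDist PVX W y) := by
    intro y
    unfold outDist
    rw [ENNReal.ofReal_tsum_of_nonneg (fun vx => mul_nonneg (hPVX.1 _) ((hW _).1 _)) (hsumY y),
      ENNReal.tsum_prod']
    simp only [ENNReal.ofReal_mul (hPVX.1 _)]
  have hT : ∀ v x y, (0 < PV v ∧ (v, x, y) ∉ bad) →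
      ENNReal.ofReal (Real.exp (n * γ)) * ENNReal.ofReal (outDist PVX W y) ≤
        ENNReal.ofReal (PV v) * ENNReal.ofReal (W x y) := by
    rintro v x y ⟨hv, hb⟩
    rw [← ENNReal.ofReal_mul (Real.exp_pos _).le, ← ENNReal.ofReal_mul hv.le]
    apply ENNReal.ofReal_le_ofReal
    simp only [hbad, Set.mem_setOf_eq, not_le] at hb
    have hb' : Real.log (1 / PV v) + n * γ < Real.log (W x y / outDist PVX W y) := by
      have := mul_lt_mul_of_pos_left hb hn0
      field_simp at this
      field_simp
      linarith
    have hlog : 0 ≤ Real.log (1 / PV v) :=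
      Real.log_nonneg (by rw [le_div_iff₀ hv]; simpa using hPV.le_one v)
    have hpos : 0 < Real.log (W x y / outDist PVX W y) :=
      lt_of_le_of_lt (by positivity) hb'
    have hr0 : W x y / outDist PVX W y ≠ 0 := by
      intro h; rw [h] at hpos; simp at hpos
    have hr : 0 < W x y / outDist PVX W y :=
      lt_of_le_of_ne (div_nonneg ((hW _).1 _) (hPY0 y)) hr0.symm
    have hY : 0 < outDist PVX W y :=
      lt_of_le_of_ne (hPY0 y) (fun h => hr0 (by rw [← h]; simp))
    have h3 := Real.exp_lt_exp.2 hb'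
    rw [Real.exp_log hr, Real.exp_add, Real.exp_log (by positivity), lt_div_iff₀ hY] at h3
    have h4 := mul_lt_mul_of_pos_left h3 hv
    have h5 : PV v * (1 / PV v * Real.exp (n * γ) * outDist PVX W y) =
        Real.exp (n * γ) * outDist PVX W y := by field_simp
    linarith
  obtain ⟨φ, ψ, h⟩ := oneShot (fun v x => ENNReal.ofReal (PVX (v, x)))
    (fun v => ENNReal.ofReal (PV v)) (fun x y => ENNReal.ofReal (W x y))
    (fun y => ENNReal.ofReal (outDist PVX W y)) hPVX' hPV.tsum_ofReal
    (fun x => (hW x).tsum_ofReal) hPY (ENNReal.ofReal (Real.exp (n * γ)))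
    (by simp [Real.exp_pos]) ENNReal.ofReal_ne_top
    (fun v x y => 0 < PV v ∧ (v, x, y) ∉ bad) hT
  refine ⟨φ, ψ, ?_⟩
  have hJ0 : ∀ z, 0 ≤ jointLaw PVX W z := fun z => mul_nonneg (hPVX.1 _) ((hW _).1 _)
  have hJs : Summable (jointLaw PVX W) := (jointLaw_isPMF W hW PVX hPVX).2.summable
  have hp0 : 0 ≤ prob (jointLaw PVX W) bad := prob_nonneg hJ0 _
  rw [← ENNReal.ofReal_le_ofReal_iff (by positivity), ENNReal.ofReal_add hp0 (Real.exp_pos _).le]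
  refine le_trans ?_ (h.trans (add_le_add ?_ ?_))
  · unfold errProb
    refine (ofReal_tsum_le _ fun v => mul_nonneg (hPV.1 v) (prob_nonneg (hW _).1 _)).trans ?_
    refine ENNReal.tsum_le_tsum fun v => ?_
    rw [ENNReal.ofReal_mul (hPV.1 v)]
    gcongr
    unfold prob
    refine (ofReal_tsum_le _ fun y => Set.indicator_nonneg (fun a _ => (hW _).1 a) y).trans ?_
    refine ENNReal.tsum_le_tsum fun y => ?_
    by_cases hy : ψ y = v <;> simp [hy]
  · unfold prob
    rw [ENNReal.ofReal_tsum_of_nonneg (fun z => Set.indicator_nonneg (fun a _ => hJ0 a) z)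
      (hJs.indicator bad), ENNReal.tsum_prod']
    simp only [ENNReal.tsum_prod']
    refine ENNReal.tsum_le_tsum fun v => ENNReal.tsum_le_tsum fun x =>
      ENNReal.tsum_le_tsum fun y => ?_
    by_cases hb : (v, x, y) ∈ bad
    · rw [Set.indicator_of_mem hb, if_neg (by tauto), jointLaw, ENNReal.ofReal_mul (hPVX.1 _)]
    · by_cases hv : 0 < PV v
      · rw [if_pos ⟨hv, hb⟩]; exact zero_le
      · have hv0 : ENNReal.ofReal (PV v) = 0 := ENNReal.ofReal_eq_zero.2 (not_lt.1 hv)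
        have h1 := hPVX' v
        rw [hv0, ENNReal.tsum_eq_zero] at h1
        rw [if_neg (by tauto), h1 x, zero_mul]; exact zero_le
  · rw [Real.exp_neg, ENNReal.ofReal_inv_of_pos (Real.exp_pos _)]

/-- **ε-Direct theorem** (Theorem 5.1). -/
theorem eps_direct_theorem
    {𝒱 𝒳 𝒴 : Type} [Countable 𝒱] [Countable 𝒳] [Countable 𝒴]
    (ε : ℝ) (hε0 : 0 ≤ ε) (hε1 : ε < 1)
    (PV : (n : ℕ) → Word 𝒱 n → ℝ) (hPV : ∀ n, IsPMF (PV n))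
    (W : (n : ℕ) → Word 𝒳 n → Word 𝒴 n → ℝ) (hW : ∀ n x, IsPMF (W n x))
    (PVX : (n : ℕ) → Word 𝒱 n × Word 𝒳 n → ℝ) (hPVX : ∀ n, IsPMF (PVX n))
    (hmarg : ∀ n v, (∑' x : Word 𝒳 n, PVX n (v, x)) = PV n v)
    (γ : ℕ → ℝ) (hγpos : ∀ n, 0 < γ n)
    (hγ0 : Tendsto γ atTop (nhds 0))
    (hnγ : Tendsto (fun n : ℕ => (n : ℝ) * γ n) atTop atTop)
    (hspec : Filter.limsup (fun n =>
        prob (jointLaw (PVX n) (W n))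
          {z : Word 𝒱 n × Word 𝒳 n × Word 𝒴 n |
            (1 / (n : ℝ)) * Real.log (W n z.2.1 z.2.2 / outDist (PVX n) (W n) z.2.2) ≤
              (1 / (n : ℝ)) * Real.log (1 / PV n z.1) + γ n}) atTop ≤ ε) :
    ∃ (φ : (n : ℕ) → Word 𝒱 n → Word 𝒳 n) (ψ : (n : ℕ) → Word 𝒴 n → Word 𝒱 n),
      Filter.limsup (fun n => errProb (PV n) (W n) (φ n) (ψ n)) atTop ≤ ε := by
  have hex : ∀ n, ∃ (φ : Word 𝒱 n → Word 𝒳 n) (ψ : Word 𝒴 n → Word 𝒱 n), 1 ≤ n →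
      errProb (PV n) (W n) φ ψ ≤ prob (jointLaw (PVX n) (W n))
          {z : Word 𝒱 n × Word 𝒳 n × Word 𝒴 n |
            (1 / (n : ℝ)) * Real.log (W n z.2.1 z.2.2 / outDist (PVX n) (W n) z.2.2) ≤
              (1 / (n : ℝ)) * Real.log (1 / PV n z.1) + γ n} + Real.exp (-(n * γ n)) := by
    intro n
    by_cases hn : 1 ≤ n
    · obtain ⟨φ, ψ, h⟩ := oneShotReal n hn (PV n) (hPV n) (W n) (hW n) (PVX n) (hPVX n) (hmarg n)
        (γ n) (hγpos n)
      exact ⟨φ, ψ, fun _ => h⟩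
    · obtain rfl : n = 0 := by omega
      exact ⟨fun _ i => i.elim0, fun _ i => i.elim0, fun h => absurd h hn⟩
  choose φ ψ h using hex
  refine ⟨φ, ψ, ?_⟩
  have herr0 : ∀ n, 0 ≤ errProb (PV n) (W n) (φ n) (ψ n) := fun n =>
    tsum_nonneg fun v => mul_nonneg ((hPV n).1 v) (prob_nonneg (hW n _).1 _)
  have hJ0 : ∀ n z, 0 ≤ jointLaw (PVX n) (W n) z := fun n z =>
    mul_nonneg ((hPVX n).1 _) ((hW n _).1 _)
  have hexp : Tendsto (fun n : ℕ => Real.exp (-(n * γ n))) atTop (nhds 0) :=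
    Real.tendsto_exp_neg_atTop_nhds_zero.comp hnγ
  refine le_of_forall_pos_le_add fun δ hδ => ?_
  have h1 := eventually_lt_of_limsup_lt (lt_of_le_of_lt hspec (by linarith : ε < ε + δ / 2))
    (by
      refine isBoundedUnder_of ⟨1, fun n => ?_⟩
      exact prob_jointLaw_le_one (W n) (hW n) (PVX n) (hPVX n) _)
  have h2 : ∀ᶠ n : ℕ in atTop, Real.exp (-(n * γ n)) < δ / 2 :=
    hexp.eventually (gt_mem_nhds (by linarith))
  refine limsup_le_of_le ?_ ?_
  · exact IsBoundedUnder.isCoboundedUnder_le (isBoundedUnder_of ⟨0, fun n => herr0 n⟩)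
  · filter_upwards [h1, h2, eventually_ge_atTop 1] with n a b c
    have := h n c
    linarith

end ISC
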